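/- Let p be a prime and N : ℕ with N ≥ 1. For every function g : ZMod (p^N) → ZMod p there exists a polynomial map f : ℤ → ℤ of degree ≤ p^N − 1 such that for all x ∈ ℤ, the reduction of f(x) modulo p equals g(x mod p^N). In other words, every ZMod p-valued function on ℤ/p^N is realized as the mod-p reduction of an integer-valued polynomial map. -/

import Mathlib

/-- The difference operator: `(D_a f)(x) = f (a + x) - f x`. -/
def DOp {A B : Type*} [AddCommGroup A] [AddCommGroup B] (a : A) (f : A → B) : A → B :=
  fun x => f (a + x) - f x

/-- `f : A → B` is a polynomial map of degree `≤ n`. -/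
def IsPolyDeg {A B : Type*} [AddCommGroup A] [AddCommGroup B] : ℕ → (A → B) → Prop
  | 0 => fun f => ∀ a x, DOp a f x = 0
  | n + 1 => fun f => ∀ a, IsPolyDeg n (DOp a f)

/-!
Newton's forward-difference formula interpolates any integer sequence on `0, …, p ^ N - 1` by an
integer combination of the polynomials `x.choose k` with `k < p ^ N`. By Chu–Vandermonde,
translating `x` by `p ^ N` changes `x.choose k` by a combination of the numbers `(p ^ N).choose j`
with `0 < j < p ^ N`, all divisible by `p`. So the interpolant is `p ^ N`-periodic modulo `p`, and
it reduces to `g` everywhere as soon as it does on `0, …, p ^ N - 1`.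
-/

open Finset Function

namespace IsPolyDeg

variable {A B C : Type*} [AddCommGroup A] [AddCommGroup B] [AddCommGroup C]

theorem const (n : ℕ) (b : B) : IsPolyDeg n (fun _ : A => b) := by
  induction n generalizing b with
  | zero => exact fun _ _ => sub_self b
  | succ n ih =>
    intro a
    rw [show DOp a (fun _ => b) = fun _ => 0 from funext fun _ => sub_self b]
    exact ih 0

theorem succ {n : ℕ} {f : A → B} (hf : IsPolyDeg n f) : IsPolyDeg (n + 1) f := by
  induction n generalizing f with
  | zero =>
    intro a
    rw [show DOp a f = fun _ => 0 from funext (hf a)]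
    exact const 0 0
  | succ n ih => exact fun a => ih (hf a)

theorem mono {m n : ℕ} (hmn : m ≤ n) {f : A → B} (hf : IsPolyDeg m f) : IsPolyDeg n f :=
  Nat.le_induction hf (fun _ _ => succ) n hmn

theorem add {n : ℕ} {f g : A → B} (hf : IsPolyDeg n f) (hg : IsPolyDeg n g) :
    IsPolyDeg n (f + g) := by
  have DOp_add (a : A) (f g : A → B) : DOp a (f + g) = DOp a f + DOp a g :=
    funext fun _ => add_sub_add_comm ..
  induction n generalizing f g with
  | zero =>
    intro a x
    rw [DOp_add, Pi.add_apply, hf a x, hg a x, add_zero]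
  | succ n ih =>
    intro a
    rw [DOp_add]
    exact ih (hf a) (hg a)

theorem sum {ι : Type*} {n : ℕ} (s : Finset ι) {f : ι → A → B}
    (hf : ∀ i ∈ s, IsPolyDeg n (f i)) : IsPolyDeg n (fun x => ∑ i ∈ s, f i x) := by
  rw [← Finset.sum_fn]
  exact Finset.sum_induction f (IsPolyDeg n) (fun _ _ => add) (const n 0) hf

theorem map {n : ℕ} {f : A → B} (hf : IsPolyDeg n f) (φ : B →+ C) :
    IsPolyDeg n (fun x => φ (f x)) := by
  have DOp_map (a : A) (f : A → B) : DOp a (fun x => φ (f x)) = fun x => φ (DOp a f x) :=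
    funext fun _ => (map_sub φ _ _).symm
  induction n generalizing f with
  | zero =>
    intro a x
    simp only [DOp_map, hf a x, map_zero]
  | succ n ih =>
    intro a
    rw [DOp_map]
    exact ih (hf a)

end IsPolyDeg

section Binomial

variable {R : Type*} [CommRing R] [BinomialRing R]

theorem DOp_choose (a : R) (k : ℕ) :
    DOp a (fun x => Ring.choose x k) =
      fun x => ∑ i ∈ range k, Ring.choose x i * Ring.choose a (k - i) := by
  funext x
  rw [DOp, add_comm a x, Ring.add_choose_eq k (Commute.all x a),
    Nat.sum_antidiagonal_eq_sum_range_succ_mk, sum_range_succ, Nat.sub_self,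
    Ring.choose_zero_right, mul_one, add_sub_cancel_right]

theorem isPolyDeg_choose (k : ℕ) : IsPolyDeg k (fun x : R => Ring.choose x k) := by
  induction k using Nat.strong_induction_on with
  | h k ih =>
    cases k with
    | zero => simpa only [Ring.choose_zero_right] using IsPolyDeg.const 0 (1 : R)
    | succ k =>
      intro a
      rw [DOp_choose]
      refine IsPolyDeg.sum _ fun i hi => ?_
      have hik : i < k + 1 := mem_range.1 hi
      exact ((ih i hik).mono (Nat.le_of_lt_succ hik)).map
        (AddMonoidHom.mulRight (Ring.choose a (k + 1 - i)))

theorem periodic_map_choose {S : Type*} [Ring S] {p : ℕ} [CharP S p] (hp : p.Prime) (φ : R →+* S)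
    {k N : ℕ} (hk : k < p ^ N) :
    Periodic (fun x : R => φ (Ring.choose x k)) ((p ^ N : ℕ) : R) := by
  intro x
  have hdiff : φ (DOp ((p ^ N : ℕ) : R) (fun y => Ring.choose y k) x) = 0 := by
    rw [DOp_choose, map_sum]
    refine sum_eq_zero fun i hi => ?_
    have hik : i < k := mem_range.1 hi
    have hdvd : p ∣ (p ^ N).choose (k - i) := hp.dvd_choose_pow (by lia) (by lia)
    rw [Ring.choose_natCast, map_mul, map_natCast, (CharP.cast_eq_zero_iff S p _).2 hdvd, mul_zero]
  rwa [DOp, map_sub, sub_eq_zero, add_comm] at hdiff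

end Binomial

section NewtonInterpolant

variable {R : Type*} [CommRing R] [BinomialRing R]

/-- The Newton interpolation polynomial of the sequence `u` at the nodes `0, …, n - 1`, expanded
in the basis `x.choose k` and viewed as a function on a binomial ring. -/
def newtonInterpolant {M : Type*} [AddCommGroup M] [Module R M] (u : ℕ → M) (n : ℕ) (x : R) : M :=
  ∑ k ∈ range n, Ring.choose x k • (fwdDiff 1)^[k] u 0

theorem isPolyDeg_newtonInterpolant {M : Type*} [AddCommGroup M] [Module R M] (u : ℕ → M) (n : ℕ) :
    IsPolyDeg (n - 1) (newtonInterpolant u n : R → M) := by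
  refine IsPolyDeg.sum _ fun k hk => ?_
  have hkn : k ≤ n - 1 := Nat.le_sub_one_of_lt (mem_range.1 hk)
  exact ((isPolyDeg_choose k).mono hkn).map ((smulAddHom R M).flip ((fwdDiff 1)^[k] u 0))

theorem newtonInterpolant_natCast {M : Type*} [AddCommGroup M] [Module R M] (u : ℕ → M)
    {m n : ℕ} (hmn : m < n) : newtonInterpolant u n (m : R) = u m := by
  calc newtonInterpolant u n (m : R)
      = ∑ k ∈ range n, m.choose k • (fwdDiff 1)^[k] u 0 := by
        simp only [newtonInterpolant, Ring.choose_natCast, Nat.cast_smul_eq_nsmul]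
    _ = ∑ k ∈ range (m + 1), m.choose k • (fwdDiff 1)^[k] u 0 := by
        refine (sum_subset (range_subset_range.2 hmn) fun k _ hk => ?_).symm
        have hmk : m < k := Nat.lt_of_succ_le (not_lt.1 (mem_range.not.1 hk))
        rw [Nat.choose_eq_zero_of_lt hmk, zero_smul]
    _ = u m := by
        simpa using (shift_eq_sum_fwdDiff_iter 1 u m 0).symm

theorem periodic_map_newtonInterpolant {S : Type*} [Ring S] {p : ℕ} [CharP S p] (hp : p.Prime)
    (φ : R →+* S) (u : ℕ → R) {n N : ℕ} (hn : n ≤ p ^ N) :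
    Periodic (fun x : R => φ (newtonInterpolant u n x)) ((p ^ N : ℕ) : R) := by
  intro x
  simp only [newtonInterpolant, smul_eq_mul, map_sum, map_mul]
  refine sum_congr rfl fun k hk => ?_
  have hkN : k < p ^ N := (mem_range.1 hk).trans_le hn
  exact congrArg (· * _) (periodic_map_choose hp φ hkN x)

end NewtonInterpolant

theorem eq_of_periodic_of_modEq {α : Type*} {f : ℤ → α} {c x y : ℤ} (hf : Periodic f c)
    (hxy : x ≡ y [ZMOD c]) : f x = f y := by
  obtain ⟨z, hz⟩ := hxy.dvd
  rw [eq_add_of_sub_eq' hz, mul_comm]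
  exact (hf.int_mul z x).symm

/-- Every `ZMod p`-valued function on `ℤ/p^N` is the mod-`p` reduction of an integer-valued
polynomial map `ℤ → ℤ` of degree `≤ p^N - 1`. -/
theorem function_on_zmod_lifts_to_polyMap (p : ℕ) (hp : p.Prime) (N : ℕ) (hN : 1 ≤ N)
    (g : ZMod (p ^ N) → ZMod p) :
    ∃ f : ℤ → ℤ, IsPolyDeg (p ^ N - 1) f ∧
      ∀ x : ℤ, ((f x : ZMod p)) = g (x : ZMod (p ^ N)) := by
  have : NeZero (p ^ N) := ⟨pow_ne_zero N hp.ne_zero⟩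
  let u : ℕ → ℤ := fun m => (g m).cast
  refine ⟨newtonInterpolant u (p ^ N), isPolyDeg_newtonInterpolant u (p ^ N), fun x => ?_⟩
  let m : ℕ := (x : ZMod (p ^ N)).val
  have hm : (m : ZMod (p ^ N)) = x := ZMod.natCast_zmod_val _
  have hxm : x ≡ m [ZMOD (p ^ N : ℕ)] := by
    rw [← ZMod.intCast_eq_intCast_iff, Int.cast_natCast, hm]
  have hper : Periodic (fun y : ℤ => ((newtonInterpolant u (p ^ N) y : ℤ) : ZMod p)) (p ^ N : ℕ) :=
    periodic_map_newtonInterpolant hp (Int.castRingHom (ZMod p)) u le_rfl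
  have hmod := eq_of_periodic_of_modEq hper hxm
  calc ((newtonInterpolant u (p ^ N) x : ℤ) : ZMod p)
      = (newtonInterpolant u (p ^ N) (m : ℤ) : ℤ) := hmod
    _ = (u m : ZMod p) := by rw [newtonInterpolant_natCast u (ZMod.val_lt _)]
    _ = g m := ZMod.intCast_zmod_cast _
    _ = g x := by rw [hm]
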